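/- Let G = (V,E) be a graph, u ∈ V, and i a nonnegative integer. If S and S′ are two label assignments on G such that S(v) = S′(v) for every vertex v at graph distance at most i+1 from u, then u has the same colour at time i with respect to S as with respect to S′. In particular, the colour of u at time i is determined by the restriction of the label assignment to the ball of radius i+1 around u. -/

import Mathlib

open MeasureTheory ProbabilityTheory Filter Set

namespace InducedForest

variable {V : Type*}

/-- Label `i` is *relevant* for vertex `v` (w.r.t. the label assignment `S`):
either `i = 0` and `0 ∈ S v`, or `i ∈ S v`, no `j < i` is relevant for `v`, and
there is a unique neighbour of `v` having a relevant label strictly smaller than `i`. -/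
def Relevant (G : SimpleGraph V) (S : V → Set ℕ) (i : ℕ) : V → Prop :=
  Nat.strongRecOn i (fun i ih v =>
    (i = 0 ∧ 0 ∈ S v) ∨
    (i ∈ S v ∧ (∀ j, (h : j < i) → ¬ ih j h v) ∧
      (∃! u, G.Adj v u ∧ ∃ j, ∃ h : j < i, ih j h u)))

/-- `v` has some relevant label `≤ l`, i.e. `v ∈ R_{≤ l}`. -/
def RelevantLe (G : SimpleGraph V) (S : V → Set ℕ) (l : ℕ) (v : V) : Prop :=
  ∃ i ≤ l, Relevant G S i v

inductive Colour | white | blue | orange | purple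
deriving DecidableEq

open Classical in
/-- The colour of `u` at time `l`. -/
noncomputable def colourAt (G : SimpleGraph V) (S : V → Set ℕ) (l : ℕ) (u : V) : Colour :=
  if RelevantLe G S l u then Colour.purple
  else if ∀ v, G.Adj u v → ¬ RelevantLe G S l v then Colour.white
  else if ∃! v, G.Adj u v ∧ RelevantLe G S l v then Colour.blue
  else Colour.orange

/-- The set `W_l` of white vertices at time `l`. -/
def White (G : SimpleGraph V) (S : V → Set ℕ) (l : ℕ) : Set V :=
  {u | ¬ RelevantLe G S l u ∧ ∀ v, G.Adj u v → ¬ RelevantLe G S l v}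

/-- The set `B_l` of blue vertices at time `l`. -/
def Blue (G : SimpleGraph V) (S : V → Set ℕ) (l : ℕ) : Set V :=
  {u | ¬ RelevantLe G S l u ∧ ∃! v, G.Adj u v ∧ RelevantLe G S l v}

/-!
Whether `i` is relevant for `u` is decided by whether `i ∈ S u` and by the relevance of strictly
smaller labels at `u` and at its neighbours. Each step away from `u` thus lowers the label by at
least one, so only the questions `j ∈ S v` with `dist u v + j ≤ i` matter. The colour at time `i`
also looks at the neighbours of `u`, which costs one further step.
-/

section Locality

variable {G : SimpleGraph V} {S S' : V → Set ℕ} {u : V}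

theorem relevant_iff {i : ℕ} :
    Relevant G S i u ↔ (i = 0 ∧ 0 ∈ S u) ∨
      (i ∈ S u ∧ (∀ j < i, ¬ Relevant G S j u) ∧
        ∃! w, G.Adj u w ∧ ∃ j < i, Relevant G S j w) := by
  unfold Relevant
  rw [Nat.strongRecOn_eq]
  simp only [exists_prop]

theorem edist_le_edist_add_one_of_adj {w : V} (huw : G.Adj u w) (v : V) :
    G.edist u v ≤ G.edist w v + 1 :=
  calc G.edist u v ≤ G.edist u w + G.edist w v := SimpleGraph.edist_triangle
    _ = G.edist w v + 1 := by rw [SimpleGraph.edist_eq_one_iff_adj.mpr huw, add_comm]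

theorem edist_add_le_add_one_of_adj {w v : V} (huw : G.Adj u w) {m n : ℕ∞}
    (h : G.edist w v + m ≤ n) : G.edist u v + m ≤ n + 1 :=
  calc G.edist u v + m ≤ (G.edist w v + 1) + m := by
        gcongr
        exact edist_le_edist_add_one_of_adj huw v
    _ = (G.edist w v + m) + 1 := add_right_comm ..
    _ ≤ n + 1 := by gcongr

theorem relevant_congr_of_edist_add_le {i : ℕ}
    (h : ∀ v, ∀ j : ℕ, G.edist u v + j ≤ i → (j ∈ S v ↔ j ∈ S' v)) :
    Relevant G S i u ↔ Relevant G S' i u := by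
  induction i using Nat.strong_induction_on generalizing u with
  | _ i ih =>
    have labels_self {j : ℕ} (hj : j ≤ i) : j ∈ S u ↔ j ∈ S' u :=
      h u j (by simpa using hj)
    have relevant_self {k : ℕ} (hk : k < i) : Relevant G S k u ↔ Relevant G S' k u :=
      ih k hk fun v j hj => h v j (hj.trans (by exact_mod_cast hk.le))
    have relevant_adj {w : V} (hw : G.Adj u w) {k : ℕ} (hk : k < i) :
        Relevant G S k w ↔ Relevant G S' k w :=
      ih k hk fun v j hj =>
        h v j ((edist_add_le_add_one_of_adj hw hj).trans (by exact_mod_cast hk))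
    rw [relevant_iff, relevant_iff, labels_self i.zero_le, labels_self le_rfl]
    refine or_congr_right (and_congr_right' (and_congr ?_ ?_))
    · exact forall₂_congr fun k hk => not_congr (relevant_self hk)
    · exact existsUnique_congr fun w => and_congr_right fun hw =>
        exists_congr fun k => and_congr_right (relevant_adj hw)

theorem relevantLe_congr_of_edist_add_le {l : ℕ}
    (h : ∀ v, ∀ j : ℕ, G.edist u v + j ≤ l → (j ∈ S v ↔ j ∈ S' v)) :
    RelevantLe G S l u ↔ RelevantLe G S' l u :=
  exists_congr fun i => and_congr_right fun hil =>
    relevant_congr_of_edist_add_le fun v j hj => h v j (hj.trans (by exact_mod_cast hil))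

theorem colourAt_congr {l : ℕ} (hself : RelevantLe G S l u ↔ RelevantLe G S' l u)
    (hadj : ∀ v, G.Adj u v → (RelevantLe G S l v ↔ RelevantLe G S' l v)) :
    colourAt G S l u = colourAt G S' l u := by
  have hwhite : (∀ v, G.Adj u v → ¬ RelevantLe G S l v) ↔
      ∀ v, G.Adj u v → ¬ RelevantLe G S' l v :=
    forall₂_congr fun v hv => not_congr (hadj v hv)
  have hblue : (∃! v, G.Adj u v ∧ RelevantLe G S l v) ↔
      ∃! v, G.Adj u v ∧ RelevantLe G S' l v :=
    existsUnique_congr fun v => and_congr_right (hadj v)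
  classical
  unfold colourAt
  exact if_congr hself rfl (if_congr hwhite rfl (if_congr hblue rfl rfl))

theorem colourAt_eq_of_eqOn_ball_general {i : ℕ}
    (h : ∀ v, ∀ j ≤ i, G.edist u v + j ≤ i + 1 → (j ∈ S v ↔ j ∈ S' v)) :
    colourAt G S i u = colourAt G S' i u := by
  have le_of_edist_add_le {w v : V} {j : ℕ} (hj : G.edist w v + j ≤ i) : j ≤ i := by
    exact_mod_cast le_add_self.trans hj
  refine colourAt_congr (relevantLe_congr_of_edist_add_le fun v j hj => ?_)
    fun w hw => relevantLe_congr_of_edist_add_le fun v j hj => ?_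
  · exact h v j (le_of_edist_add_le hj) (hj.trans le_self_add)
  · exact h v j (le_of_edist_add_le hj) (edist_add_le_add_one_of_adj hw hj)

end Locality

/-- The colour of `u` at time `i` only depends on the labels of vertices
at graph distance at most `i + 1` from `u`. -/
theorem colourAt_eq_of_eqOn_ball
    (G : SimpleGraph V) (S S' : V → Set ℕ) (u : V) (i : ℕ)
    (h : ∀ v : V, G.Reachable u v → G.dist u v ≤ i + 1 → S v = S' v) :
    colourAt G S i u = colourAt G S' i u := by
  refine colourAt_eq_of_eqOn_ball_general fun v j _ hj => ?_
  have hle : G.edist u v ≤ (i + 1 : ℕ) := le_self_add.trans hj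
  have hr : G.Reachable u v :=
    SimpleGraph.edist_ne_top_iff_reachable.mp (ne_top_of_le_ne_top (ENat.natCast_ne_top _) hle)
  rw [h v hr (ENat.toNat_le_of_le_natCast hle)]

end InducedForest
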